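/- Let (X, F, μ, T) be a measure-preserving system on a probability space and let f be a measurable function on X with ∫ |f| log^+ |f| dμ < ∞ (i.e. f ∈ L log L). Define N*(f)(x) = sup_{n ≥ 1} (1/n) · #{ k ≥ 1 : |f|(T^k x)/k ≥ 1/n }. Then N*(f) ∈ L^1(μ). -/

import Mathlib

open MeasureTheory Filter Topology
open scoped ENNReal

/-!
Every `k ≥ n` has `k / n` in a unique dyadic interval `[2 ^ j, 2 ^ (j + 1))`, and is counted by
`N*` at scale `n` only if `T^k x` visits `{2 ^ j ≤ |f|}`. Counting these visits up to time
`2 ^ (j + 1) n` gives `N* f ≤ 1 + ∑ j, 2 ^ (j + 1) M_j`, where `M_j` is the ergodic maximal function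
of the indicator of `{2 ^ j ≤ |f|}`. The weak-type maximal inequality, integrated dyadically over
the levels between `4 ^ (-j)` and `1`, yields `∫ M_j ≤ 4 ^ (-j) + 4 j μ {2 ^ j ≤ |f|}`: the cutoff
at `4 ^ (-j)` leaves a summable error, and the factor `j` becomes the logarithm in `L log L`.
-/

section MaximalErgodic

variable {X : Type*}

/-- The maximal excess `max_{k ≤ n} (S_k - k l)⁺` of the Birkhoff sums `S_k` of `u` over the line of
slope `l`, encoded by the recursion that drives Garsia's proof of the maximal ergodic theorem;
truncated subtraction in `ℝ≥0∞` provides the positive part. -/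
noncomputable def maximalExcess (T : X → X) (u : X → ℝ≥0∞) (l : ℝ≥0∞) : ℕ → X → ℝ≥0∞
  | 0, _ => 0
  | n + 1, x => u x + maximalExcess T u l n (T x) - l

/-- The ergodic maximal function `sup_{n ≥ 1} S_n / n` of `u`; the index is shifted by one to avoid
the empty average. -/
noncomputable def ergodicMaximal (T : X → X) (u : X → ℝ≥0∞) (x : X) : ℝ≥0∞ :=
  ⨆ n : ℕ, birkhoffSum T u (n + 1) x / ((n : ℝ≥0∞) + 1)

lemma monotone_maximalExcess (T : X → X) (u : X → ℝ≥0∞) (l : ℝ≥0∞) :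
    Monotone (maximalExcess T u l) := by
  refine monotone_nat_of_le_succ fun n => ?_
  induction n with
  | zero => exact fun _ => zero_le
  | succ n ih =>
    intro x
    simp only [maximalExcess]
    gcongr
    exact ih (T x)

lemma birkhoffSum_le_add_maximalExcess (T : X → X) (u : X → ℝ≥0∞) (l : ℝ≥0∞) (n : ℕ) (x : X) :
    birkhoffSum T u n x ≤ n * l + maximalExcess T u l n x := by
  induction n generalizing x with
  | zero => simp
  | succ n ih =>
    have hstep : u x + maximalExcess T u l n (T x) ≤ maximalExcess T u l (n + 1) x + l :=
      le_tsub_add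
    calc birkhoffSum T u (n + 1) x = u x + birkhoffSum T u n (T x) := birkhoffSum_succ' T u n x
      _ ≤ u x + (n * l + maximalExcess T u l n (T x)) := by gcongr; exact ih (T x)
      _ = n * l + (u x + maximalExcess T u l n (T x)) := by ring
      _ ≤ n * l + (maximalExcess T u l (n + 1) x + l) := by gcongr
      _ = (n + 1 : ℕ) * l + maximalExcess T u l (n + 1) x := by push_cast; ring

lemma indicator_add_maximalExcess_le (T : X → X) (u : X → ℝ≥0∞) (l : ℝ≥0∞) (n : ℕ) (x : X) :
    {x | 0 < maximalExcess T u l n x}.indicator (fun _ => l) x + maximalExcess T u l n x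
      ≤ u x + maximalExcess T u l n (T x) := by
  by_cases hx : 0 < maximalExcess T u l n x
  · rw [Set.indicator_of_mem (by exact hx)]
    cases n with
    | zero => exact absurd hx (lt_irrefl _)
    | succ n =>
      have hl : l ≤ u x + maximalExcess T u l n (T x) := (tsub_pos_iff_lt.1 hx).le
      calc l + maximalExcess T u l (n + 1) x = u x + maximalExcess T u l n (T x) :=
            add_tsub_cancel_of_le hl
        _ ≤ u x + maximalExcess T u l (n + 1) (T x) := by
            gcongr; exact monotone_maximalExcess T u l n.le_succ (T x)
  · have hzero : maximalExcess T u l n x = 0 := nonpos_iff_eq_zero.1 (not_lt.1 hx)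
    rw [Set.indicator_of_notMem (by exact hx), hzero, add_zero]
    exact zero_le

lemma birkhoffSum_le_mul_ergodicMaximal (T : X → X) (u : X → ℝ≥0∞) (n : ℕ) (x : X) :
    birkhoffSum T u n x ≤ n * ergodicMaximal T u x := by
  cases n with
  | zero => simp
  | succ n =>
    rw [mul_comm, Nat.cast_add_one, ← ENNReal.div_le_iff (by simp) (by finiteness)]
    exact le_iSup (fun n : ℕ => birkhoffSum T u (n + 1) x / ((n : ℝ≥0∞) + 1)) n

lemma ergodicMaximal_le_one (T : X → X) {u : X → ℝ≥0∞} (hu : ∀ x, u x ≤ 1) (x : X) :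
    ergodicMaximal T u x ≤ 1 := by
  refine iSup_le fun n => ENNReal.div_le_of_le_mul ?_
  calc birkhoffSum T u (n + 1) x ≤ ∑ _k ∈ Finset.range (n + 1), (1 : ℝ≥0∞) :=
        Finset.sum_le_sum fun k _ => hu _
    _ = 1 * (n + 1) := by simp

lemma setOf_lt_ergodicMaximal_subset (T : X → X) (u : X → ℝ≥0∞) (l : ℝ≥0∞) :
    {x | l < ergodicMaximal T u x} ⊆ ⋃ n, {x | 0 < maximalExcess T u l n x} := by
  intro x hx
  obtain ⟨n, hn⟩ := lt_iSup_iff.1 (show l < ergodicMaximal T u x from hx)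
  refine Set.mem_iUnion.2 ⟨n + 1, ?_⟩
  by_contra hnonpos
  have hzero : maximalExcess T u l (n + 1) x = 0 := nonpos_iff_eq_zero.1 (not_lt.1 hnonpos)
  refine hn.not_ge ?_
  have hsum := birkhoffSum_le_add_maximalExcess T u l (n + 1) x
  rw [hzero, add_zero, Nat.cast_add_one, mul_comm] at hsum
  exact ENNReal.div_le_of_le_mul hsum

variable [MeasurableSpace X] {μ : Measure X} {T : X → X} {u : X → ℝ≥0∞}

lemma aemeasurable_maximalExcess (hT : MeasurePreserving T μ μ) (hu : AEMeasurable u μ)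
    (l : ℝ≥0∞) (n : ℕ) : AEMeasurable (maximalExcess T u l n) μ := by
  induction n with
  | zero => exact aemeasurable_const
  | succ n ih =>
    exact (hu.add (ih.comp_quasiMeasurePreserving hT.quasiMeasurePreserving)).sub_const l

lemma aemeasurable_ergodicMaximal (hT : MeasurePreserving T μ μ) (hu : AEMeasurable u μ) :
    AEMeasurable (ergodicMaximal T u) μ :=
  AEMeasurable.iSup fun _ => AEMeasurable.div_const
    (Finset.aemeasurable_fun_sum _ fun k _ =>
      hu.comp_quasiMeasurePreserving (hT.iterate k).quasiMeasurePreserving) _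

lemma lintegral_comp_of_measurePreserving {Y : Type*} [MeasurableSpace Y] {ν : Measure Y}
    {S : X → Y} (hS : MeasurePreserving S μ ν) {g : Y → ℝ≥0∞} (hg : AEMeasurable g ν) :
    ∫⁻ x, g (S x) ∂μ = ∫⁻ y, g y ∂ν := by
  rw [← hS.map_eq] at hg ⊢
  exact (lintegral_map' hg hS.aemeasurable).symm

lemma lintegral_maximalExcess_ne_top (hT : MeasurePreserving T μ μ) (hu : AEMeasurable u μ)
    (hfin : ∫⁻ x, u x ∂μ ≠ ⊤) (l : ℝ≥0∞) (n : ℕ) : ∫⁻ x, maximalExcess T u l n x ∂μ ≠ ⊤ := by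
  induction n with
  | zero => simp [maximalExcess]
  | succ n ih =>
    refine ne_top_of_le_ne_top (ENNReal.add_ne_top.2 ⟨hfin, ih⟩) ?_
    calc ∫⁻ x, maximalExcess T u l (n + 1) x ∂μ
        ≤ ∫⁻ x, u x + maximalExcess T u l n (T x) ∂μ := lintegral_mono fun x => tsub_le_self
      _ = ∫⁻ x, u x ∂μ + ∫⁻ x, maximalExcess T u l n x ∂μ := by
        rw [lintegral_add_left' hu,
          lintegral_comp_of_measurePreserving hT (aemeasurable_maximalExcess hT hu l n)]

lemma mul_measure_maximalExcess_pos_le (hT : MeasurePreserving T μ μ) (hu : AEMeasurable u μ)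
    (l : ℝ≥0∞) (n : ℕ) : l * μ {x | 0 < maximalExcess T u l n x} ≤ ∫⁻ x, u x ∂μ := by
  obtain htop | hfin := eq_or_ne (∫⁻ x, u x ∂μ) ⊤
  · exact htop ▸ le_top
  have hG := aemeasurable_maximalExcess hT hu l n
  have hpos : NullMeasurableSet {x | 0 < maximalExcess T u l n x} μ :=
    nullMeasurableSet_lt aemeasurable_const hG
  have hint := lintegral_mono (μ := μ) (indicator_add_maximalExcess_le T u l n)
  rw [lintegral_add_right' _ hG, lintegral_indicator_const₀ hpos, lintegral_add_left' hu,
    lintegral_comp_of_measurePreserving hT hG] at hint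
  exact (ENNReal.add_le_add_iff_right (lintegral_maximalExcess_ne_top hT hu hfin l n)).1 hint

lemma mul_measure_lt_ergodicMaximal_le (hT : MeasurePreserving T μ μ) (hu : AEMeasurable u μ)
    (l : ℝ≥0∞) : l * μ {x | l < ergodicMaximal T u x} ≤ ∫⁻ x, u x ∂μ := by
  have hmono : Monotone fun n => {x | 0 < maximalExcess T u l n x} :=
    fun m n hmn x hx => lt_of_lt_of_le hx (monotone_maximalExcess T u l hmn x)
  calc l * μ {x | l < ergodicMaximal T u x}
      ≤ l * μ (⋃ n, {x | 0 < maximalExcess T u l n x}) := by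
        gcongr; exact setOf_lt_ergodicMaximal_subset T u l
    _ = ⨆ n, l * μ {x | 0 < maximalExcess T u l n x} := by
        rw [hmono.measure_iUnion, ENNReal.mul_iSup]
    _ ≤ ∫⁻ x, u x ∂μ := iSup_le fun n => mul_measure_maximalExcess_pos_le hT hu l n

end MaximalErgodic

section DyadicIntegration

variable {X : Type*}

lemma le_inv_two_pow_add_sum_indicator {y : ℝ≥0∞} (hy : y ≤ 1) (m : ℕ) :
    y ≤ 2⁻¹ ^ m +
      ∑ i ∈ Finset.range m, (Set.Ioi (2⁻¹ ^ (i + 1))).indicator (fun _ => 2⁻¹ ^ i) y := by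
  induction m with
  | zero => simpa using hy
  | succ m ih =>
    by_cases h : 2⁻¹ ^ (m + 1) < y
    · rw [Finset.sum_range_succ, Set.indicator_of_mem (Set.mem_Ioi.2 h), add_comm (Finset.sum _ _)]
      exact ih.trans le_add_self
    · exact (not_lt.1 h).trans le_self_add

lemma inv_two_pow_eq_two_mul (i : ℕ) : (2⁻¹ : ℝ≥0∞) ^ i = 2 * 2⁻¹ ^ (i + 1) := by
  rw [pow_succ', ← mul_assoc, ENNReal.mul_inv_cancel two_ne_zero ENNReal.ofNat_ne_top, one_mul]

lemma lintegral_le_of_mul_measure_lt_le [MeasurableSpace X] {μ : Measure X} {g : X → ℝ≥0∞}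
    (hg : AEMeasurable g μ) (hg_le : ∀ᵐ x ∂μ, g x ≤ 1) {C : ℝ≥0∞}
    (hC : ∀ l, l * μ {x | l < g x} ≤ C) (m : ℕ) :
    ∫⁻ x, g x ∂μ ≤ 2⁻¹ ^ m * μ Set.univ + 2 * m * C := by
  have hlevel (i : ℕ) : NullMeasurableSet {x | 2⁻¹ ^ (i + 1) < g x} μ :=
    nullMeasurableSet_lt aemeasurable_const hg
  calc ∫⁻ x, g x ∂μ
      ≤ ∫⁻ x, (2⁻¹ ^ m + ∑ i ∈ Finset.range m,
          {x | 2⁻¹ ^ (i + 1) < g x}.indicator (fun _ => 2⁻¹ ^ i) x) ∂μ :=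
        lintegral_mono_ae (hg_le.mono fun x hx => le_inv_two_pow_add_sum_indicator hx m)
    _ = 2⁻¹ ^ m * μ Set.univ +
          ∑ i ∈ Finset.range m, 2⁻¹ ^ i * μ {x | 2⁻¹ ^ (i + 1) < g x} := by
        rw [lintegral_add_left measurable_const, lintegral_const, lintegral_finsetSum' _
          fun i _ => aemeasurable_const.indicator₀ (hlevel i)]
        simp only [lintegral_indicator_const₀ (hlevel _)]
    _ ≤ 2⁻¹ ^ m * μ Set.univ + ∑ _i ∈ Finset.range m, 2 * C := by
        refine add_le_add_right (Finset.sum_le_sum fun i _ => ?_) _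
        rw [inv_two_pow_eq_two_mul, mul_assoc]
        gcongr
        exact hC _
    _ = 2⁻¹ ^ m * μ Set.univ + 2 * m * C := by
        rw [Finset.sum_const, Finset.card_range, nsmul_eq_mul]; ring

lemma sum_ite_two_pow_le {t : ℝ} (ht : 0 ≤ t) (m : ℕ) :
    ∑ j ∈ Finset.range m, (if (2 : ℝ) ^ j ≤ t then (2 : ℝ) ^ j else 0) ≤ 2 * t := by
  induction m with
  | zero => simpa using ht
  | succ m ih =>
    by_cases h : (2 : ℝ) ^ m ≤ t
    · calc ∑ j ∈ Finset.range (m + 1), (if (2 : ℝ) ^ j ≤ t then (2 : ℝ) ^ j else 0)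
          ≤ ∑ j ∈ Finset.range (m + 1), (2 : ℝ) ^ j := by
            gcongr with j
            split_ifs
            exacts [le_rfl, by positivity]
        _ = 2 * 2 ^ m - 1 := by rw [geom_sum_eq (by norm_num)]; ring
        _ ≤ 2 * t := by linarith
    · rwa [Finset.sum_range_succ, if_neg h, add_zero]

lemma sum_ite_mul_two_pow_le {t : ℝ} (ht : 0 ≤ t) (m : ℕ) :
    ∑ j ∈ Finset.range m, (if (2 : ℝ) ^ j ≤ t then (j : ℝ) * 2 ^ j else 0)
      ≤ 2 / Real.log 2 * (t * Real.posLog t) := by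
  have hlog_two : 0 < Real.log 2 := Real.log_pos one_lt_two
  have hlog_t : 0 ≤ Real.posLog t := Real.posLog_nonneg
  calc ∑ j ∈ Finset.range m, (if (2 : ℝ) ^ j ≤ t then (j : ℝ) * 2 ^ j else 0)
      ≤ ∑ j ∈ Finset.range m,
          Real.posLog t / Real.log 2 * (if (2 : ℝ) ^ j ≤ t then (2 : ℝ) ^ j else 0) := by
        refine Finset.sum_le_sum fun j _ => ?_
        split_ifs with h
        · gcongr
          rw [le_div_iff₀ hlog_two, ← Real.log_pow]
          exact (Real.log_le_log (by positivity) h).trans (le_max_right _ _)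
        · simp
    _ ≤ Real.posLog t / Real.log 2 * (2 * t) := by
        rw [← Finset.mul_sum]; gcongr; exact sum_ite_two_pow_le ht m
    _ = 2 / Real.log 2 * (t * Real.posLog t) := by ring

lemma tsum_ite_mul_two_pow_le {t : ℝ} (ht : 0 ≤ t) :
    ∑' j : ℕ, (if (2 : ℝ) ^ j ≤ t then (j : ℝ≥0∞) * 2 ^ j else 0)
      ≤ ENNReal.ofReal (2 / Real.log 2) * ENNReal.ofReal (t * Real.posLog t) := by
  have hterm (j : ℕ) : (if (2 : ℝ) ^ j ≤ t then (j : ℝ≥0∞) * 2 ^ j else 0)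
      = ENNReal.ofReal (if (2 : ℝ) ^ j ≤ t then (j : ℝ) * 2 ^ j else 0) := by
    split_ifs <;> simp [ENNReal.ofReal_mul, ENNReal.ofReal_pow]
  rw [ENNReal.tsum_eq_iSup_nat, ← ENNReal.ofReal_mul (by positivity)]
  refine iSup_le fun m => ?_
  simp only [hterm]
  rw [← ENNReal.ofReal_sum_of_nonneg fun j _ => by positivity]
  exact ENNReal.ofReal_le_ofReal (sum_ite_mul_two_pow_le ht m)

lemma tsum_mul_two_pow_mul_measure_le [MeasurableSpace X] {μ : Measure X} {f : X → ℝ}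
    (hf : AEMeasurable f μ) :
    ∑' j : ℕ, j * 2 ^ j * μ {x | 2 ^ j ≤ |f x|}
      ≤ ENNReal.ofReal (2 / Real.log 2) * ∫⁻ x, ENNReal.ofReal (|f x| * Real.posLog (f x)) ∂μ := by
  have hlevel (j : ℕ) : NullMeasurableSet {x | 2 ^ j ≤ |f x|} μ :=
    nullMeasurableSet_le aemeasurable_const hf.abs
  calc ∑' j : ℕ, j * 2 ^ j * μ {x | 2 ^ j ≤ |f x|}
      = ∑' j : ℕ, ∫⁻ x, {x | 2 ^ j ≤ |f x|}.indicator (fun _ => j * 2 ^ j) x ∂μ := by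
        simp only [lintegral_indicator_const₀ (hlevel _)]
    _ = ∫⁻ x, ∑' j : ℕ, {x | 2 ^ j ≤ |f x|}.indicator (fun _ => j * 2 ^ j) x ∂μ :=
        (lintegral_tsum fun j => aemeasurable_const.indicator₀ (hlevel j)).symm
    _ ≤ ∫⁻ x, ENNReal.ofReal (2 / Real.log 2) *
          ENNReal.ofReal (|f x| * Real.posLog (f x)) ∂μ := by
        refine lintegral_mono fun x => ?_
        simpa only [Set.indicator_apply, Set.mem_ofPred_eq, Real.posLog_abs]
          using tsum_ite_mul_two_pow_le (abs_nonneg (f x))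
    _ = ENNReal.ofReal (2 / Real.log 2) *
          ∫⁻ x, ENNReal.ofReal (|f x| * Real.posLog (f x)) ∂μ :=
        lintegral_const_mul' _ _ ENNReal.ofReal_ne_top

end DyadicIntegration

section MaximalCount

variable {X : Type*}

/-- The maximal counting function `N*`, with `n ≥ 1` written as `n + 1`. -/
noncomputable def maximalCount (T : X → X) (f : X → ℝ) (x : X) : ℝ≥0∞ :=
  ⨆ n : ℕ, (({k : ℕ | 1 ≤ k ∧ (1 : ℝ) / (n + 1) ≤ |f (T^[k] x)| / k}.encard : ℝ≥0∞)
    / ((n : ℝ≥0∞) + 1))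

lemma count_visits_eq_birkhoffSum (T : X → X) (A : Set X) (N : ℕ) (x : X) :
    Measure.count {k : ℕ | k < N ∧ T^[k] x ∈ A} = birkhoffSum T (A.indicator 1) N x := by
  classical
  have hset : {k : ℕ | k < N ∧ T^[k] x ∈ A} = {k ∈ Finset.range N | T^[k] x ∈ A} := by
    ext k; simp
  rw [hset, Measure.count_apply_finset, Finset.card_filter, birkhoffSum]
  simp only [Set.indicator_apply, Pi.one_apply, Nat.cast_sum, Nat.cast_ite, Nat.cast_one,
    Nat.cast_zero]

lemma exists_two_pow_mul_le_and_lt {k n : ℕ} (hn : 0 < n) (hk : n ≤ k) :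
    ∃ j, 2 ^ j * n ≤ k ∧ k < 2 ^ (j + 1) * n := by
  refine ⟨Nat.log 2 (k / n), ?_, ?_⟩
  · exact (Nat.le_div_iff_mul_le hn).1 (Nat.pow_log_le_self 2 (Nat.div_pos hk hn).ne')
  · exact (Nat.div_lt_iff_lt_mul hn).1 (Nat.lt_pow_succ_log_self one_lt_two _)

lemma setOf_inv_le_div_subset (a : ℕ → ℝ) {n : ℕ} (hn : 0 < n) :
    {k : ℕ | 1 ≤ k ∧ (1 : ℝ) / n ≤ a k / k} ⊆
      Finset.range n ∪ ⋃ j : ℕ, {k | k < 2 ^ (j + 1) * n ∧ 2 ^ j ≤ a k} := by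
  rintro k ⟨hk, hcount⟩
  obtain hkn | hnk := lt_or_ge k n
  · exact Or.inl (by simpa using hkn)
  obtain ⟨j, hjk, hkj⟩ := exists_two_pow_mul_le_and_lt hn hnk
  refine Or.inr (Set.mem_iUnion.2 ⟨j, hkj, ?_⟩)
  have hn_pos : (0 : ℝ) < n := by exact_mod_cast hn
  rw [div_le_div_iff₀ hn_pos (by exact_mod_cast hk), one_mul] at hcount
  exact le_of_mul_le_mul_right (le_trans (by exact_mod_cast hjk) hcount) hn_pos

lemma maximalCount_le (T : X → X) (f : X → ℝ) (x : X) :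
    maximalCount T f x ≤
      1 + ∑' j : ℕ, 2 ^ (j + 1) * ergodicMaximal T ({y | 2 ^ j ≤ |f y|}.indicator 1) x := by
  refine iSup_le fun n => ENNReal.div_le_of_le_mul ?_
  set A : ℕ → Set X := fun j => {y | 2 ^ j ≤ |f y|}
  have hsubset := setOf_inv_le_div_subset (fun k => |f (T^[k] x)|) n.succ_pos
  simp only [Nat.succ_eq_add_one, Nat.cast_add_one] at hsubset
  rw [← Measure.count_apply MeasurableSet.of_discrete]
  calc Measure.count {k : ℕ | 1 ≤ k ∧ (1 : ℝ) / (n + 1) ≤ |f (T^[k] x)| / k}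
      ≤ Measure.count (Finset.range (n + 1) : Set ℕ)
          + ∑' j, Measure.count {k | k < 2 ^ (j + 1) * (n + 1) ∧ T^[k] x ∈ A j} :=
        (measure_mono hsubset).trans <| (measure_union_le _ _).trans <|
          add_le_add_right (measure_iUnion_le _) _
    _ = (n + 1) + ∑' j, birkhoffSum T ((A j).indicator 1) (2 ^ (j + 1) * (n + 1)) x := by
        rw [Measure.count_apply_finset, Finset.card_range, Nat.cast_add_one]
        simp only [count_visits_eq_birkhoffSum]
    _ ≤ (n + 1) + ∑' j, 2 ^ (j + 1) * ergodicMaximal T ((A j).indicator 1) x * (n + 1) := by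
        gcongr with j
        refine (birkhoffSum_le_mul_ergodicMaximal _ _ _ _).trans_eq ?_
        push_cast
        ring
    _ = (1 + ∑' j, 2 ^ (j + 1) * ergodicMaximal T ((A j).indicator 1) x) * (n + 1) := by
        rw [ENNReal.tsum_mul_right]; ring

variable [MeasurableSpace X] {μ : Measure X} {T : X → X}

lemma two_pow_mul_lintegral_ergodicMaximal_indicator_le (hT : MeasurePreserving T μ μ) {A : Set X}
    (hA : NullMeasurableSet A μ) (j : ℕ) :
    2 ^ (j + 1) * ∫⁻ x, ergodicMaximal T (A.indicator 1) x ∂μ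
      ≤ 2 * μ Set.univ * 2⁻¹ ^ j + 8 * (j * 2 ^ j * μ A) := by
  have hind : AEMeasurable (A.indicator (1 : X → ℝ≥0∞)) μ := aemeasurable_const.indicator₀ hA
  have hind_le (x : X) : A.indicator (1 : X → ℝ≥0∞) x ≤ 1 := Set.indicator_le_self' (by simp) x
  have hweak (l : ℝ≥0∞) : l * μ {x | l < ergodicMaximal T (A.indicator 1) x} ≤ μ A :=
    (mul_measure_lt_ergodicMaximal_le hT hind l).trans_eq (lintegral_indicator_one₀ hA)
  have hcancel : (2 : ℝ≥0∞) ^ j * 2⁻¹ ^ j = 1 := by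
    rw [← mul_pow, ENNReal.mul_inv_cancel two_ne_zero ENNReal.ofNat_ne_top, one_pow]
  calc 2 ^ (j + 1) * ∫⁻ x, ergodicMaximal T (A.indicator 1) x ∂μ
      ≤ 2 ^ (j + 1) * (2⁻¹ ^ (2 * j) * μ Set.univ + 2 * (2 * j : ℕ) * μ A) := by
        gcongr
        exact lintegral_le_of_mul_measure_lt_le (aemeasurable_ergodicMaximal hT hind)
          (.of_forall (ergodicMaximal_le_one T hind_le)) hweak (2 * j)
    _ = 2 * μ Set.univ * (2 ^ j * 2⁻¹ ^ j * 2⁻¹ ^ j) + 8 * (j * 2 ^ j * μ A) := by push_cast; ring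
    _ = 2 * μ Set.univ * 2⁻¹ ^ j + 8 * (j * 2 ^ j * μ A) := by rw [hcancel, one_mul]

lemma lintegral_maximalCount_le_tsum (hT : MeasurePreserving T μ μ) {f : X → ℝ}
    (hf : AEMeasurable f μ) :
    ∫⁻ x, maximalCount T f x ∂μ
      ≤ 5 * μ Set.univ + 8 * ∑' j : ℕ, j * 2 ^ j * μ {x | 2 ^ j ≤ |f x|} := by
  have hlevel (j : ℕ) : NullMeasurableSet {x | 2 ^ j ≤ |f x|} μ :=
    nullMeasurableSet_le aemeasurable_const hf.abs
  have hM (j : ℕ) : AEMeasurable (ergodicMaximal T ({x | 2 ^ j ≤ |f x|}.indicator 1)) μ :=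
    aemeasurable_ergodicMaximal hT (aemeasurable_const.indicator₀ (hlevel j))
  calc ∫⁻ x, maximalCount T f x ∂μ
      ≤ ∫⁻ x, 1 + ∑' j : ℕ,
          2 ^ (j + 1) * ergodicMaximal T ({y | 2 ^ j ≤ |f y|}.indicator 1) x ∂μ :=
        lintegral_mono (maximalCount_le T f)
    _ = μ Set.univ + ∑' j : ℕ,
          2 ^ (j + 1) * ∫⁻ x, ergodicMaximal T ({y | 2 ^ j ≤ |f y|}.indicator 1) x ∂μ := by
        rw [lintegral_add_left measurable_const, lintegral_one,
          lintegral_tsum fun j => (hM j).const_mul _]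
        simp only [lintegral_const_mul'' _ (hM _)]
    _ ≤ μ Set.univ + ∑' j : ℕ,
          (2 * μ Set.univ * 2⁻¹ ^ j + 8 * (j * 2 ^ j * μ {x | 2 ^ j ≤ |f x|})) := by
        gcongr with j
        exact two_pow_mul_lintegral_ergodicMaximal_indicator_le hT (hlevel j) j
    _ = 5 * μ Set.univ + 8 * ∑' j : ℕ, j * 2 ^ j * μ {x | 2 ^ j ≤ |f x|} := by
        rw [ENNReal.tsum_add, ENNReal.tsum_mul_left, ENNReal.tsum_mul_left,
          ENNReal.tsum_geometric, ENNReal.one_sub_inv_two, inv_inv]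
        ring

theorem assani_Nstar_LlogL_general (hT : MeasurePreserving T μ μ) {f : X → ℝ}
    (hf : AEMeasurable f μ) :
    ∫⁻ x, maximalCount T f x ∂μ ≤ 5 * μ Set.univ +
      ENNReal.ofReal (16 / Real.log 2) *
        ∫⁻ x, ENNReal.ofReal (|f x| * Real.posLog (f x)) ∂μ := by
  have hconst : ENNReal.ofReal (16 / Real.log 2) = 8 * ENNReal.ofReal (2 / Real.log 2) := by
    rw [← ENNReal.ofReal_ofNat 8, ← ENNReal.ofReal_mul (by positivity)]
    congr 1
    ring
  refine (lintegral_maximalCount_le_tsum hT hf).trans ?_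
  rw [hconst, mul_assoc]
  gcongr
  exact tsum_mul_two_pow_mul_measure_le hf

end MaximalCount

/-- **Assani's integrability theorem for the maximal counting function `N*` on
`L log L`.** If `∫ |f| log⁺|f| dμ < ∞` then
`N*(f)(x) = sup_{n ≥ 1} (1/n)·#{k ≥ 1 : |f|(Tᵏx)/k ≥ 1/n}` is integrable (the supremum
over `n ≥ 1` is expressed by indexing with `n + 1`, `n ∈ ℕ`, and cardinalities are taken
in `ℝ≥0∞`). -/
theorem assani_Nstar_LlogL
    {X : Type*} [MeasurableSpace X] (μ : Measure X) [IsProbabilityMeasure μ]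
    (T : X → X) (hT : MeasurePreserving T μ μ)
    (f : X → ℝ) (hfmeas : Measurable f)
    (hLlogL : ∫⁻ x, ENNReal.ofReal (|f x| * Real.log (max |f x| 1)) ∂μ < ⊤) :
    ∫⁻ x,
        (⨆ n : ℕ,
          (({k : ℕ | 1 ≤ k ∧ (1 : ℝ) / (n + 1) ≤ |f (T^[k] x)| / k}.encard : ℝ≥0∞)
            / ((n : ℝ≥0∞) + 1))) ∂μ < ⊤ := by
  simp only [max_comm _ (1 : ℝ), ← Real.posLog_eq_log_max_one (abs_nonneg _),
    Real.posLog_abs] at hLlogL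
  exact (assani_Nstar_LlogL_general hT hfmeas.aemeasurable).trans_lt (by finiteness)
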